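/- arXiv:1311.3728 — 9 statements merged into one kernel-verified Lean document; each statement's English description precedes it below -/
import Mathlib

section
/- Let C be a monotone CNF formula all of whose clauses are nonempty, and let x be a variable occurring in exactly the clauses c_1,…,c_d with d ≥ 1 and w_j = |c_j| − 1 ≥ 1 for every j. Suppose every clause of every sub-instance C_{j,i} is nonempty. Then R(C,x) = ∏_{j=1}^{d} ( 1 − ∏_{i=1}^{w_j} R(C_{j,i}, x_{j,i}) / (1 + R(C_{j,i}, x_{j,i})) ). -/
open Finset

variable {V : Type*} [Fintype V] [DecidableEq V]

/-- An assignment `σ` satisfies a monotone CNF formula (a finite collection of clauses,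
each clause a finite set of variables) if every clause contains a variable set to `true`. -/
def CnfSat (C : List (Finset V)) (σ : V → Bool) : Prop :=
  ∀ c ∈ C, ∃ v ∈ c, σ v = true

/-- The number of satisfying assignments giving variable `x` the value `b`. -/
noncomputable def NSat (C : List (Finset V)) (x : V) (b : Bool) : ℕ :=
  Nat.card {σ : V → Bool // CnfSat C σ ∧ σ x = b}

/-- The marginal ratio `R(C,x) = P_C(x=0)/P_C(x=1)`. -/
noncomputable def Rcnf (C : List (Finset V)) (x : V) : ℝ :=
  (NSat C x false : ℝ) / (NSat C x true : ℝ)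

/-- The sub-instance `C_{j,i}`: starting from `C`, the clauses `c_1,…,c_{j-1}` (those
before position `j` among the clauses containing `x`) and the clause `c_j` are deleted,
each clause `c_k` with `k > j` is replaced by `c_k ∖ {x}`, and the variables
`x_{j,1},…,x_{j,i-1}` (here `X b` for `b < i`) are pinned to `0`, i.e. removed from every
clause.  (Only the set of clauses matters for satisfaction.) -/
def CnfSub (C : List (Finset V)) (x : V) {d : ℕ} (c : Fin d → Finset V)
    {m : ℕ} (X : Fin m → V) (j : Fin d) (i : Fin m) : List (Finset V) :=
  (C.filter (fun cl => decide (x ∉ cl)) ++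
      ((List.ofFn c).drop (j.1 + 1)).map (fun cl => cl.erase x)).map
    (fun cl => cl \ (Finset.univ.filter (fun b => b < i)).image X)

/-- The number of assignments satisfying a predicate. -/
noncomputable def assignCount (p : (V → Bool) → Prop) : ℕ :=
  Nat.card {σ : V → Bool // p σ}

theorem assignCount_congr {p q : (V → Bool) → Prop} (h : ∀ σ, p σ ↔ q σ) :
    assignCount p = assignCount q := by
  rw [show p = q from funext fun σ => propext (h σ)]

theorem assignCount_split (p q : (V → Bool) → Prop) :
    assignCount p = assignCount (fun σ => p σ ∧ q σ) + assignCount (fun σ => p σ ∧ ¬ q σ) := by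
  classical
  simp only [assignCount, Nat.card_eq_fintype_card, Fintype.card_subtype]
  rw [← Finset.card_filter_add_card_filter_not (s := univ.filter p) q, Finset.filter_filter,
    Finset.filter_filter]

theorem assignCount_pos {p : (V → Bool) → Prop} (σ : V → Bool) (h : p σ) :
    0 < assignCount p :=
  have : Nonempty {σ : V → Bool // p σ} := ⟨⟨σ, h⟩⟩
  Nat.card_pos

/-- A predicate that ignores the variables in `S` can have them fixed at the cost of a factor
`2 ^ |S|`. -/
theorem assignCount_eq_pow_mul (p : (V → Bool) → Prop) (S : Finset V) (b : Bool)
    (h : ∀ σ τ : V → Bool, (∀ v ∉ S, σ v = τ v) → p σ → p τ) :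
    assignCount p = 2 ^ S.card * assignCount (fun σ => p σ ∧ ∀ v ∈ S, σ v = b) := by
  let e : {σ : V → Bool // p σ} ≃
      (S → Bool) × {σ : V → Bool // p σ ∧ ∀ v ∈ S, σ v = b} :=
    { toFun := fun σ => (fun v => σ.1 v, ⟨fun v => if v ∈ S then b else σ.1 v,
        h σ.1 _ (fun v hv => by simp [hv]) σ.2, fun v hv => by simp [hv]⟩)
      invFun := fun t => ⟨fun v => if hv : v ∈ S then t.1 ⟨v, hv⟩ else t.2.1 v,
        h t.2.1 _ (fun v hv => by simp [hv]) t.2.2.1⟩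
      left_inv := fun σ => by
        ext v
        by_cases hv : v ∈ S <;> simp [hv]
      right_inv := fun t => by
        refine Prod.ext (funext fun v => by simp) (Subtype.ext (funext fun v => ?_))
        by_cases hv : v ∈ S
        · simp [hv, t.2.2.2 v hv]
        · simp [hv] }
  rw [assignCount, Nat.card_congr e, Nat.card_prod]
  simp [assignCount]

theorem cnfSat_of_eq_off {C : List (Finset V)} {S : Finset V} (hS : ∀ c ∈ C, Disjoint c S)
    {σ τ : V → Bool} (h : ∀ v ∉ S, σ v = τ v) (hσ : CnfSat C σ) : CnfSat C τ := by
  intro c hc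
  obtain ⟨v, hv, hv'⟩ := hσ c hc
  exact ⟨v, hv, by rw [← h v (Finset.disjoint_left.1 (hS c hc) hv), hv']⟩

theorem cnfSat_map_sdiff_iff (C : List (Finset V)) (S : Finset V) (σ : V → Bool)
    (h : ∀ v ∈ S, σ v = false) : CnfSat (C.map (fun c => c \ S)) σ ↔ CnfSat C σ := by
  simp only [CnfSat, List.forall_mem_map]
  refine forall₂_congr fun c _ => exists_congr fun v => ?_
  by_cases hv : v ∈ S
  · simp [h v hv]
  · simp [hv]

theorem cnfSat_true {C : List (Finset V)} (h : ∀ c ∈ C, c.Nonempty) :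
    CnfSat C (fun _ => true) := fun c hc => by
  obtain ⟨v, hv⟩ := h c hc
  exact ⟨v, hv, rfl⟩

theorem prod_range_succ_div {f : ℕ → ℝ} (h0 : f 0 ≠ 0) :
    ∀ n : ℕ, (∀ i < n, f i ≠ 0) → ∏ i ∈ range n, f (i + 1) / f i = f n / f 0
  | 0, _ => by simp [h0]
  | n + 1, h => by
    have hn : f n ≠ 0 := h n n.lt_succ_self
    rw [Finset.prod_range_succ, prod_range_succ_div h0 n fun i hi => h i (by omega)]
    field_simp

/-- Writing `T n` for the number of models of `F` in which `X b` is false for all `b < n`, the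
product of the probabilities that `X i` is false in `F` with its predecessors pinned to false
telescopes. -/
theorem prod_pinned_ratio (F : List (Finset V)) {m : ℕ} (X : Fin m → V)
    (hX : Function.Injective X) (hF : ∀ c ∈ F, c.Nonempty)
    (hne : ∀ i : Fin m, ∀ c ∈ F.map (fun c => c \ (univ.filter (· < i)).image X), c.Nonempty) :
    ∏ i : Fin m, Rcnf (F.map (fun c => c \ (univ.filter (· < i)).image X)) (X i) /
        (1 + Rcnf (F.map (fun c => c \ (univ.filter (· < i)).image X)) (X i)) =
      (assignCount (fun σ => CnfSat F σ ∧ ∀ b, σ (X b) = false) : ℝ) /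
        assignCount (CnfSat F) := by
  let T : ℕ → ℕ := fun n =>
    assignCount (fun σ => CnfSat F σ ∧ ∀ b : Fin m, b.1 < n → σ (X b) = false)
  have key : ∀ i : Fin m, T i ≠ 0 ∧
      Rcnf (F.map (fun c => c \ (univ.filter (· < i)).image X)) (X i) /
        (1 + Rcnf (F.map (fun c => c \ (univ.filter (· < i)).image X)) (X i)) =
      (T (i + 1) : ℝ) / T i := by
    intro i
    have hi := hne i
    set S := (univ.filter (· < i)).image X with hS
    set G := F.map (fun c => c \ S) with hG
    have hdisj : ∀ c ∈ G, Disjoint c S := by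
      simp only [hG, List.forall_mem_map]
      exact fun c _ => Finset.sdiff_disjoint
    have hmem : ∀ σ : V → Bool, (∀ v ∈ S, σ v = false) ↔
        ∀ b : Fin m, b.1 < i → σ (X b) = false := by
      intro σ
      simp [hS]
    have hXi : X i ∉ S := by
      simp only [hS, mem_image, mem_filter, mem_univ, true_and, not_exists, not_and]
      exact fun b hb hbi => hb.ne (hX hbi)
    have hpos : 0 < NSat G (X i) true := assignCount_pos _ ⟨cnfSat_true hi, rfl⟩
    have hsum : NSat G (X i) false + NSat G (X i) true = 2 ^ S.card * T i := by
      have h1 : assignCount (CnfSat G) = NSat G (X i) false + NSat G (X i) true := by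
        rw [assignCount_split _ (fun σ => σ (X i) = false)]
        simp only [Bool.not_eq_false]
        rfl
      rw [← h1, assignCount_eq_pow_mul _ S false fun σ τ h => cnfSat_of_eq_off hdisj h]
      congr 1
      refine assignCount_congr fun σ => ?_
      rw [← hmem]
      exact and_congr_left fun h => cnfSat_map_sdiff_iff F S σ h
    have hfalse : NSat G (X i) false = 2 ^ S.card * T (i + 1) := by
      change assignCount (fun σ => CnfSat G σ ∧ σ (X i) = false) = _
      rw [assignCount_eq_pow_mul _ S false fun σ τ h hσ =>
        ⟨cnfSat_of_eq_off hdisj h hσ.1, by rw [← h _ hXi, hσ.2]⟩]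
      congr 1
      refine assignCount_congr fun σ => ?_
      have hsucc : (∀ b : Fin m, b.1 < i + 1 → σ (X b) = false) ↔
          σ (X i) = false ∧ ∀ v ∈ S, σ v = false := by
        rw [hmem]
        refine ⟨fun h => ⟨h i (by omega), fun b hb => h b (by omega)⟩, fun h b hb => ?_⟩
        rcases Nat.lt_succ_iff_lt_or_eq.1 hb with hb | hb
        · exact h.2 b hb
        · rw [Fin.ext hb]
          exact h.1
      rw [hsucc, and_assoc]
      exact and_congr_left fun h => cnfSat_map_sdiff_iff F S σ h.2
    have hT : T i ≠ 0 := by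
      intro h
      rw [h] at hsum
      omega
    refine ⟨hT, ?_⟩
    have hT' : (T i : ℝ) ≠ 0 := by exact_mod_cast hT
    have hpos' : (NSat G (X i) true : ℝ) ≠ 0 := by exact_mod_cast hpos.ne'
    have hsum' : (NSat G (X i) false : ℝ) + NSat G (X i) true = 2 ^ S.card * T i := by
      exact_mod_cast hsum
    have hfalse' : (NSat G (X i) false : ℝ) = 2 ^ S.card * T (i + 1) := by
      exact_mod_cast hfalse
    have hdiv : Rcnf G (X i) / (1 + Rcnf G (X i)) =
        NSat G (X i) false / (NSat G (X i) false + NSat G (X i) true) := by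
      rw [Rcnf, one_add_div hpos', div_div_div_cancel_right₀ hpos', add_comm]
    rw [hdiv, hsum', hfalse', mul_div_mul_left _ _ (by positivity)]
  have hT0 : T 0 = assignCount (CnfSat F) := assignCount_congr fun σ => by simp
  have hTm : T m = assignCount (fun σ => CnfSat F σ ∧ ∀ b, σ (X b) = false) :=
    assignCount_congr fun σ => by simp
  rw [Finset.prod_congr rfl fun i _ => (key i).2,
    Fin.prod_univ_eq_prod_range (fun n => (T (n + 1) : ℝ) / T n) m,
    prod_range_succ_div (f := fun n => (T n : ℝ)), hT0, hTm]
  · rw [hT0]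
    exact_mod_cast (assignCount_pos _ (cnfSat_true hF)).ne'
  · exact fun i hi => by exact_mod_cast (key ⟨i, hi⟩).1

/-- let `C` be a monotone CNF formula whose clauses are all nonempty, let the
clauses containing `x` be exactly `c_1,…,c_d` (`d ≥ 1`), with `w_j = |c_j| − 1 ≥ 1` for all
`j`, let `x_{j,1},…,x_{j,w_j}` enumerate the variables of `c_j` other than `x`, and suppose
every clause of every sub-instance `C_{j,i}` is nonempty.  Then
`R(C,x) = ∏_j (1 − ∏_i R(C_{j,i},x_{j,i})/(1 + R(C_{j,i},x_{j,i})))`. -/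
theorem stmt1 (C : List (Finset V)) (hC : ∀ cl ∈ C, cl.Nonempty) (x : V)
    (d : ℕ) (hd : 1 ≤ d) (c : Fin d → Finset V)
    (hc : C.filter (fun cl => decide (x ∈ cl)) = List.ofFn c)
    (w : Fin d → ℕ) (hw : ∀ j, w j + 1 = (c j).card) (hw1 : ∀ j, 1 ≤ w j)
    (X : (j : Fin d) → Fin (w j) → V) (hXinj : ∀ j, Function.Injective (X j))
    (hXim : ∀ j, Finset.image (X j) Finset.univ = (c j).erase x)
    (hne : ∀ (j : Fin d) (i : Fin (w j)), ∀ cl ∈ CnfSub C x c (X j) j i, cl.Nonempty) :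
    Rcnf C x = ∏ j : Fin d, (1 - ∏ i : Fin (w j),
      Rcnf (CnfSub C x c (X j) j i) (X j i) / (1 + Rcnf (CnfSub C x c (X j) j i) (X j i))) := by
  let F : ℕ → List (Finset V) := fun k =>
    C.filter (fun cl => decide (x ∉ cl)) ++ ((List.ofFn c).drop k).map (fun cl => cl.erase x)
  have hcx : ∀ cl, cl ∈ List.ofFn c ↔ cl ∈ C ∧ x ∈ cl := fun cl => by
    rw [← hc]
    simp
  have hFne : ∀ k, ∀ cl ∈ F k, cl.Nonempty := by
    intro k cl hcl
    rcases List.mem_append.1 hcl with h | h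
    · exact hC cl (List.mem_filter.1 h).1
    · obtain ⟨a, ha, rfl⟩ := List.mem_map.1 h
      obtain ⟨j, rfl⟩ := List.mem_ofFn.1 (List.mem_of_mem_drop ha)
      rw [← hXim]
      exact ⟨X j ⟨0, hw1 j⟩, Finset.mem_image_of_mem _ (Finset.mem_univ _)⟩
  have hFx : ∀ k, ∀ cl ∈ F k, Disjoint cl {x} := by
    intro k cl hcl
    rw [Finset.disjoint_singleton_right]
    rcases List.mem_append.1 hcl with h | h
    · simpa using (List.mem_filter.1 h).2
    · obtain ⟨a, -, rfl⟩ := List.mem_map.1 h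
      exact Finset.notMem_erase x a
  let M : ℕ → ℕ := fun k => assignCount (CnfSat (F k))
  have hM : ∀ k, M k ≠ 0 := fun k => (assignCount_pos _ (cnfSat_true (hFne k))).ne'
  have hhalf : ∀ k b, M k = 2 * assignCount (fun σ => CnfSat (F k) σ ∧ σ x = b) := by
    intro k b
    have := assignCount_eq_pow_mul (CnfSat (F k)) {x} b fun σ τ h => cnfSat_of_eq_off (hFx k) h
    simpa using this
  have hfalse : M 0 = 2 * NSat C x false := by
    rw [hhalf 0 false]
    congr 1
    refine assignCount_congr fun σ => and_congr_left fun hx => ?_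
    simp only [CnfSat, F, List.drop_zero, List.forall_mem_append, List.forall_mem_map,
      List.mem_filter, hcx]
    have herase : ∀ cl : Finset V, (∃ v ∈ cl.erase x, σ v = true) ↔ ∃ v ∈ cl, σ v = true :=
      fun cl => exists_congr fun v => by
        by_cases hv : v = x
        · simp [hv, hx]
        · simp [hv]
    simp only [herase, decide_eq_true_eq]
    refine ⟨fun h cl hcl => ?_, fun h => ⟨fun cl hcl => h cl hcl.1, fun cl hcl => h cl hcl.1⟩⟩
    by_cases hxc : x ∈ cl
    · exact h.2 cl ⟨hcl, hxc⟩
    · exact h.1 cl ⟨hcl, hxc⟩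
  have htrue : M d = 2 * NSat C x true := by
    rw [hhalf d true]
    congr 1
    refine assignCount_congr fun σ => and_congr_left fun hx => ?_
    have hdrop : (List.ofFn c).drop d = [] := List.drop_of_length_le (by simp)
    simp only [CnfSat, F, hdrop, List.map_nil, List.append_nil, List.mem_filter,
      decide_eq_true_eq]
    refine ⟨fun h cl hcl => ?_, fun h cl hcl => h cl hcl.1⟩
    by_cases hxc : x ∈ cl
    · exact ⟨x, hxc, hx⟩
    · exact h cl ⟨hcl, hxc⟩
  have hstep : ∀ j : Fin d, (M (j + 1) : ℝ) = M j +
      assignCount (fun σ => CnfSat (F (j + 1)) σ ∧ ∀ b, σ (X j b) = false) := by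
    intro j
    have hdrop : (List.ofFn c).drop j = c j :: (List.ofFn c).drop (j + 1) := by
      rw [List.drop_eq_getElem_cons (by simp)]
      simp
    have h := assignCount_split (CnfSat (F (j + 1))) (fun σ => ∃ v ∈ (c j).erase x, σ v = true)
    have h1 : M j = assignCount
        (fun σ => CnfSat (F (j + 1)) σ ∧ ∃ v ∈ (c j).erase x, σ v = true) :=
      assignCount_congr fun σ => by
        simp only [CnfSat, F, hdrop, List.map_cons, List.forall_mem_append, List.forall_mem_cons]
        tauto
    have h2 : assignCount (fun σ => CnfSat (F (j + 1)) σ ∧ ∀ b, σ (X j b) = false) =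
        assignCount (fun σ => CnfSat (F (j + 1)) σ ∧ ¬ ∃ v ∈ (c j).erase x, σ v = true) :=
      assignCount_congr fun σ => by simp [← hXim]
    rw [h1, h2]
    exact_mod_cast h
  have hfactor : ∀ j : Fin d, (1 - ∏ i : Fin (w j),
      Rcnf (CnfSub C x c (X j) j i) (X j i) / (1 + Rcnf (CnfSub C x c (X j) j i) (X j i))) =
      (M (j + 1) : ℝ)⁻¹ / (M j : ℝ)⁻¹ := by
    intro j
    have h : ∏ i : Fin (w j), Rcnf (CnfSub C x c (X j) j i) (X j i) /
        (1 + Rcnf (CnfSub C x c (X j) j i) (X j i)) = _ :=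
      prod_pinned_ratio (F (j + 1)) (X j) (hXinj j) (hFne _) (hne j)
    have hM' : (M (j + 1) : ℝ) ≠ 0 := by exact_mod_cast hM _
    have hs := hstep j
    rw [h, div_inv_eq_mul, inv_mul_eq_div, eq_div_iff hM', sub_mul, one_mul,
      div_mul_cancel₀ _ hM', hs, add_sub_cancel_right]
  have hM0 : ∀ k, ((M k : ℝ)⁻¹) ≠ 0 := fun k => inv_ne_zero (by exact_mod_cast hM k)
  rw [Finset.prod_congr rfl fun j _ => hfactor j,
    Fin.prod_univ_eq_prod_range (fun n => (M (n + 1) : ℝ)⁻¹ / (M n : ℝ)⁻¹) d,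
    prod_range_succ_div (f := fun n => (M n : ℝ)⁻¹) (hM0 0) d fun i _ => hM0 i,
    div_inv_eq_mul, inv_mul_eq_div, hfalse, htrue, Rcnf]
  push_cast
  rw [mul_div_mul_left _ _ two_ne_zero]
end

section
/- Fix α = 0.981, an integer d ≥ 1, and integers w_1,…,w_d ≥ 1. For every two-layer vector t̂ = (t̂_{a,b})_{1≤a≤d, 1≤b≤w_a} with all t̂_{a,b} ∈ (0,1/2], setting t_a = 2^{w_a−1}·∏_{b=1}^{w_a} t̂_{a,b} (so each t_a ∈ (0,1/2]), one has κ̂_d^{(w_1,…,w_d)}(t̂) ≤ κ_d^{(w_1,…,w_d)}(t). Consequently, the supremum of κ̂_d^{(w_1,…,w_d)} over (0,1/2]^{w_1+⋯+w_d} equals the supremum of κ_d^{(w_1,…,w_d)} over (0,1/2]^d. -/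
open Finset

/-- `α^{-⌈log_4 (w+1)⌉}` with `α = 0.981`; for `w ≥ 1`, `⌈log_4 (w+1)⌉ = Nat.clog 4 (w+1)`. -/
noncomputable def amort (w : ℕ) : ℝ := (0.981 : ℝ) ^ (-(Nat.clog 4 (w + 1) : ℤ))

/-- `T(t,w) = (t/2^{w−1})/(1 − t/2^{w−1}) · ((1−t)/√t + (w−1)/√2)`. -/
noncomputable def Tfun (t : ℝ) (w : ℕ) : ℝ :=
  (t / 2 ^ (w - 1)) / (1 - t / 2 ^ (w - 1)) * ((1 - t) / Real.sqrt t + ((w : ℝ) - 1) / Real.sqrt 2)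

/-- `g(h) = √(h/(1+h))`. -/
noncomputable def gfun (h : ℝ) : ℝ := Real.sqrt (h / (1 + h))

/-- The single-layer decay rate
`κ_d^{(w_1,…,w_d)}(t) = g(∏_j ĥ(t_j,w_j)) · Σ_a T(t_a,w_a) · α^{−⌈log_4(w_a+1)⌉}`. -/
noncomputable def kap (d : ℕ) (w : Fin d → ℕ) (t : Fin d → ℝ) : ℝ :=
  gfun (∏ j, (1 - t j / 2 ^ (w j - 1))) * ∑ a, Tfun (t a) (w a) * amort (w a)

/-- The two-layer decay rate `κ̂_d^{(w_1,…,w_d)}(t̂)`. -/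
noncomputable def khat (d : ℕ) (w : Fin d → ℕ) (th : (a : Fin d) → Fin (w a) → ℝ) : ℝ :=
  Real.sqrt ((∏ a, (1 - ∏ b, th a b)) / (1 + ∏ a, (1 - ∏ b, th a b))) *
    ∑ a, amort (w a) * ((∏ b, th a b) / (1 - ∏ b, th a b)) *
      ∑ b, (1 - th a b) / Real.sqrt (th a b)

/-- The summand `(1 - x) / √x` satisfies `f x + f y ≤ f (2xy) + f (1/2)` on `(0, 1/2]`. -/
lemma one_sub_div_sqrt_add_le {x y : ℝ} (hx : x ∈ Set.Ioc (0 : ℝ) (1 / 2))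
    (hy : y ∈ Set.Ioc (0 : ℝ) (1 / 2)) :
    (1 - x) / √x + (1 - y) / √y ≤ (1 - 2 * x * y) / √(2 * x * y) + 1 / √2 := by
  obtain ⟨hx0, hx1⟩ := hx
  obtain ⟨hy0, hy1⟩ := hy
  have hs : 0 < √2 := by positivity
  have hs2 : √2 ^ 2 = 2 := Real.sq_sqrt (by norm_num)
  have ha0 : 0 < √x := Real.sqrt_pos.2 hx0
  have hb0 : 0 < √y := Real.sqrt_pos.2 hy0
  have ha2 : √x ^ 2 = x := Real.sq_sqrt hx0.le
  have hb2 : √y ^ 2 = y := Real.sq_sqrt hy0.le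
  rw [Real.sqrt_mul (by positivity), Real.sqrt_mul (by positivity)]
  generalize √2 = s at *
  generalize √x = a at *
  generalize √y = b at *
  subst ha2 hb2
  have ha1 : s * a ≤ 1 := by
    refine (sq_le_one_iff₀ (by positivity)).1 ?_
    rw [mul_pow, hs2]; linarith
  have hb1 : s * b ≤ 1 := by
    refine (sq_le_one_iff₀ (by positivity)).1 ?_
    rw [mul_pow, hs2]; linarith
  have hab : a * b ≤ 1 := by nlinarith
  have key : (1 - 2 * a ^ 2 * b ^ 2) / (s * a * b) + 1 / s
      - ((1 - a ^ 2) / a + (1 - b ^ 2) / b)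
      = (1 - s * a) * (1 - s * b) * (1 - a * b) / (s * a * b) := by
    field_simp
    ring_nf
    rw [hs2]
    ring
  have : 0 ≤ (1 - s * a) * (1 - s * b) * (1 - a * b) / (s * a * b) := by
    have h1 := sub_nonneg.2 ha1
    have h2 := sub_nonneg.2 hb1
    have h3 := sub_nonneg.2 hab
    positivity
  linarith

lemma two_pow_mul_prod_mem_Ioc {w : ℕ} (hw : 1 ≤ w) (x : Fin w → ℝ)
    (hx : ∀ b, x b ∈ Set.Ioc (0 : ℝ) (1 / 2)) :
    2 ^ (w - 1) * ∏ b, x b ∈ Set.Ioc (0 : ℝ) (1 / 2) := by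
  have hpos : 0 < ∏ b, x b := prod_pos fun b _ => (hx b).1
  refine ⟨by positivity, ?_⟩
  have hle : ∏ b, x b ≤ (1 / 2) ^ w := by
    simpa using prod_le_prod (s := univ) (fun b _ => (hx b).1.le) (fun b _ => (hx b).2)
  obtain ⟨n, rfl⟩ := Nat.exists_eq_add_of_le' hw
  calc (2 : ℝ) ^ (n + 1 - 1) * ∏ b, x b ≤ 2 ^ n * (1 / 2) ^ (n + 1) := by
        rw [Nat.add_sub_cancel]; gcongr
    _ = 1 / 2 := by rw [pow_succ, ← mul_assoc, ← mul_pow]; norm_num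

/-- Merging all coordinates of a block into the single value `2 ^ (w - 1) * ∏ x` and moving the
others to `1 / 2` does not decrease `∑ (1 - x) / √x`. -/
lemma sum_one_sub_div_sqrt_le {w : ℕ} (hw : 1 ≤ w) (x : Fin w → ℝ)
    (hx : ∀ b, x b ∈ Set.Ioc (0 : ℝ) (1 / 2)) :
    ∑ b, (1 - x b) / √(x b) ≤
      (1 - 2 ^ (w - 1) * ∏ b, x b) / √(2 ^ (w - 1) * ∏ b, x b) + ((w : ℝ) - 1) / √2 := by
  induction w, hw using Nat.le_induction with
  | base => simp
  | succ n hn ih =>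
    have hx' : ∀ b : Fin n, x b.succ ∈ Set.Ioc (0 : ℝ) (1 / 2) := fun b => hx b.succ
    have hprod : (2 : ℝ) ^ (n + 1 - 1) * ∏ b, x b
        = 2 * x 0 * (2 ^ (n - 1) * ∏ b : Fin n, x b.succ) := by
      obtain ⟨m, rfl⟩ := Nat.exists_eq_add_of_le' hn
      rw [Fin.prod_univ_succ, Nat.add_sub_cancel, Nat.add_sub_cancel]
      ring
    have hstep := one_sub_div_sqrt_add_le (hx 0) (two_pow_mul_prod_mem_Ioc hn _ hx')
    have htail := ih (fun b => x b.succ) hx'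
    rw [hprod, Fin.sum_univ_succ]
    have hcast : (((n + 1 : ℕ) : ℝ) - 1) / √2 = ((n : ℝ) - 1) / √2 + 1 / √2 := by
      push_cast; ring
    linarith

lemma amort_pos (w : ℕ) : 0 < amort w := by
  unfold amort
  positivity

lemma khat_le_kap (d : ℕ) (w : Fin d → ℕ) (hw : ∀ a, 1 ≤ w a)
    (th : (a : Fin d) → Fin (w a) → ℝ) (hth : ∀ a b, th a b ∈ Set.Ioc (0 : ℝ) (1 / 2)) :
    khat d w th ≤ kap d w (fun a => 2 ^ (w a - 1) * ∏ b, th a b) := by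
  have hcancel : ∀ a, (2 : ℝ) ^ (w a - 1) * (∏ b, th a b) / 2 ^ (w a - 1) = ∏ b, th a b :=
    fun a => mul_div_cancel_left₀ _ (by positivity)
  simp only [khat, kap, gfun, Tfun, hcancel]
  refine mul_le_mul_of_nonneg_left (sum_le_sum fun a _ => ?_) (Real.sqrt_nonneg _)
  have hP0 : 0 < ∏ b, th a b := prod_pos fun b _ => (hth a b).1
  have hP1 : ∏ b, th a b ≤ 1 :=
    prod_le_one (fun b _ => (hth a b).1.le) fun b _ => (hth a b).2.trans (by norm_num)
  rw [mul_assoc, mul_comm (amort _)]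
  exact mul_le_mul_of_nonneg_right
    (mul_le_mul_of_nonneg_left (sum_one_sub_div_sqrt_le (hw a) _ (hth a))
      (div_nonneg hP0.le (sub_nonneg.2 hP1))) (amort_pos _).le

/-- The block with first coordinate `t` and all others `1 / 2`. -/
noncomputable def halfPadded (t : ℝ) (w : ℕ) (b : Fin w) : ℝ := if b.val = 0 then t else 1 / 2

lemma prod_halfPadded (t : ℝ) {w : ℕ} (hw : 1 ≤ w) :
    ∏ b, halfPadded t w b = t / 2 ^ (w - 1) := by
  obtain ⟨n, rfl⟩ := Nat.exists_eq_add_of_le' hw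
  simp [Fin.prod_univ_succ, halfPadded, div_eq_mul_inv]

lemma sum_halfPadded (t : ℝ) {w : ℕ} (hw : 1 ≤ w) :
    ∑ b, (1 - halfPadded t w b) / √(halfPadded t w b)
      = (1 - t) / √t + ((w : ℝ) - 1) / √2 := by
  obtain ⟨n, rfl⟩ := Nat.exists_eq_add_of_le' hw
  have hhalf : (1 - 1 / 2 : ℝ) / √(1 / 2) = 1 / √2 := by
    have hs2 : √2 ^ 2 = 2 := Real.sq_sqrt (by norm_num)
    rw [Real.sqrt_div zero_le_one, Real.sqrt_one]
    field_simp
    linarith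
  simp only [Fin.sum_univ_succ, halfPadded, Fin.val_zero, if_true, Fin.val_succ,
    Nat.succ_ne_zero, if_false, hhalf, sum_const, card_univ, Fintype.card_fin, nsmul_eq_mul]
  push_cast
  ring

lemma khat_halfPadded (d : ℕ) (w : Fin d → ℕ) (hw : ∀ a, 1 ≤ w a) (t : Fin d → ℝ) :
    khat d w (fun a => halfPadded (t a) (w a)) = kap d w t := by
  simp only [khat, kap, gfun, Tfun, prod_halfPadded _ (hw _), sum_halfPadded _ (hw _)]
  congr 1
  exact sum_congr rfl fun a _ => by ring

/-- for every two-layer vector `t̂` with entries in `(0,1/2]`, setting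
`t_a = 2^{w_a−1}·∏_b t̂_{a,b}`, one has `κ̂ ≤ κ`; consequently the suprema agree. -/
theorem stmt6 (d : ℕ) (hd : 1 ≤ d) (w : Fin d → ℕ) (hw : ∀ a, 1 ≤ w a) :
    (∀ th : (a : Fin d) → Fin (w a) → ℝ, (∀ a b, th a b ∈ Set.Ioc (0 : ℝ) (1 / 2)) →
      khat d w th ≤ kap d w (fun a => 2 ^ (w a - 1) * ∏ b, th a b)) ∧
    (⨆ th : {f : (a : Fin d) → Fin (w a) → ℝ // ∀ a b, f a b ∈ Set.Ioc (0 : ℝ) (1 / 2)},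
        khat d w th.1) =
      ⨆ t : {f : Fin d → ℝ // ∀ a, f a ∈ Set.Ioc (0 : ℝ) (1 / 2)}, kap d w t.1 := by
  refine ⟨khat_le_kap d w hw, csSup_eq_csSup_of_forall_exists_le ?_ ?_⟩
  · rintro _ ⟨⟨th, hth⟩, rfl⟩
    exact ⟨_, ⟨⟨_, fun a => two_pow_mul_prod_mem_Ioc (hw a) _ (hth a)⟩, rfl⟩,
      khat_le_kap d w hw th hth⟩
  · rintro _ ⟨⟨t, ht⟩, rfl⟩
    refine ⟨_, ⟨⟨fun a => halfPadded (t a) (w a), fun a b => ?_⟩, rfl⟩,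
      (khat_halfPadded d w hw t).ge⟩
    simp only [halfPadded]
    split_ifs
    · exact ht a
    · norm_num
end

section
/- Fix α = 0.981, an integer d ≥ 2, and integers w_1,…,w_d ≥ 1. For every t = (t_1,…,t_d) ∈ (0,1/2]^d and every index a ∈ {1,…,d}, one has κ_d^{(w_1,…,w_d)}(t) ≤ κ_{d−1}^{(w_1,…,w_d) with w_a removed}(t with t_a removed) + κ_1^{(w_a)}(t_a). -/
open Finset

/-- The single-layer decay rate over an index set `s`:
`κ^{(w_j)_{j∈s}}((t_j)_{j∈s}) = g(∏_{j∈s} ĥ(t_j,w_j)) · Σ_{a∈s} T(t_a,w_a) · α^{−⌈log_4(w_a+1)⌉}`. -/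
noncomputable def kapS {ι : Type*} (s : Finset ι) (w : ι → ℕ) (t : ι → ℝ) : ℝ :=
  gfun (∏ j ∈ s, (1 - t j / 2 ^ (w j - 1))) * ∑ a ∈ s, Tfun (t a) (w a) * amort (w a)

theorem gfun_le_gfun {x y : ℝ} (hx : 0 ≤ x) (hxy : x ≤ y) : gfun x ≤ gfun y := by
  refine Real.sqrt_le_sqrt ?_
  rw [div_le_div_iff₀ (by linarith) (by linarith)]
  nlinarith

theorem div_two_pow_mem_Ioc {t : ℝ} (ht : t ∈ Set.Ioc (0 : ℝ) (1 / 2)) (n : ℕ) :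
    t / 2 ^ n ∈ Set.Ioc (0 : ℝ) (1 / 2) :=
  ⟨div_pos ht.1 (by positivity),
    (div_le_self ht.1.le (one_le_pow₀ one_le_two)).trans ht.2⟩

theorem Tfun_nonneg {t : ℝ} (ht : t ∈ Set.Ioc (0 : ℝ) (1 / 2)) {w : ℕ} (hw : 1 ≤ w) :
    0 ≤ Tfun t w := by
  obtain ⟨hpos, hle⟩ := div_two_pow_mem_Ioc ht (w - 1)
  have hw' : (1 : ℝ) ≤ w := by exact_mod_cast hw
  exact mul_nonneg (div_nonneg hpos.le (by linarith))
    (add_nonneg (div_nonneg (by linarith [ht.2]) (Real.sqrt_nonneg _))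
      (div_nonneg (by linarith) (Real.sqrt_nonneg _)))

theorem amort_nonneg (w : ℕ) : 0 ≤ amort w :=
  zpow_nonneg (by norm_num) _

/-- sub-additivity: for `d ≥ 2`, `w_j ≥ 1`, `t ∈ (0,1/2]^d` and any index `a`,
`κ_d^{(w_1,…,w_d)}(t) ≤ κ_{d−1}^{(w, a removed)}(t, a removed) + κ_1^{(w_a)}(t_a)`. -/
theorem stmt7 (d : ℕ) (hd : 2 ≤ d) (w : Fin d → ℕ) (hw : ∀ j, 1 ≤ w j)
    (t : Fin d → ℝ) (ht : ∀ j, t j ∈ Set.Ioc (0 : ℝ) (1 / 2)) (a : Fin d) :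
    kapS Finset.univ w t ≤ kapS (Finset.univ.erase a) w t + kapS {a} w t := by
  have hfac : ∀ j, 1 - t j / 2 ^ (w j - 1) ∈ Set.Icc (0 : ℝ) 1 := fun j => by
    obtain ⟨hpos, hle⟩ := div_two_pow_mem_Ioc (ht j) (w j - 1)
    constructor <;> linarith
  have hterm : ∀ j, 0 ≤ Tfun (t j) (w j) * amort (w j) := fun j =>
    mul_nonneg (Tfun_nonneg (ht j) (hw j)) (amort_nonneg _)
  have hprod : ∀ s : Finset (Fin d), 0 ≤ ∏ j ∈ s, (1 - t j / 2 ^ (w j - 1)) := fun s =>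
    Finset.prod_nonneg fun j _ => (hfac j).1
  have hmono : ∀ s : Finset (Fin d),
      gfun (∏ j, (1 - t j / 2 ^ (w j - 1))) ≤ gfun (∏ j ∈ s, (1 - t j / 2 ^ (w j - 1))) :=
    fun s => gfun_le_gfun (hprod _) <| by
      rw [← Finset.prod_mul_prod_compl s]
      exact mul_le_of_le_one_right (hprod s)
        (Finset.prod_le_one (fun j _ => (hfac j).1) fun j _ => (hfac j).2)
  unfold kapS
  rw [← Finset.sum_erase_add _ _ (Finset.mem_univ a), mul_add, Finset.sum_singleton]
  exact add_le_add
    (mul_le_mul_of_nonneg_right (hmono _) (Finset.sum_nonneg fun j _ => hterm j))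
    (mul_le_mul_of_nonneg_right (hmono _) (hterm a))
end

section
/- Fix α = 0.981 and integers w_1,…,w_d with 1 ≤ w_j ≤ 3 for every j. For every t ∈ (0,1/2]^d: if d = 4 then κ_4^{(w_1,…,w_4)}(t) < 1; if d = 3 then κ_3^{(w_1,w_2,w_3)}(t) < 0.85; if d = 2 then κ_2^{(w_1,w_2)}(t) < 0.67; and if d = 1 then κ_1^{(w_1)}(t_1) < 0.42. -/
open Finset

lemma amort_eq_of_le_three {w : ℕ} (h1 : 1 ≤ w) (h3 : w ≤ 3) : amort w = (0.981 : ℝ)⁻¹ := by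
  have h : Nat.clog 4 (w + 1) = 1 := by
    interval_cases w <;> norm_num
  simp [amort, h]

/-- Replacing `(t, w)` by `(t / 2 ^ (w - 1), 1)` keeps the factor `ĥ` and does not decrease `T`. -/
lemma Tfun_le_sqrt {t : ℝ} {w : ℕ} (h1 : 1 ≤ w) (h3 : w ≤ 3) (ht : t ∈ Set.Ioc (0 : ℝ) (1 / 2)) :
    Tfun t w ≤ √(t / 2 ^ (w - 1)) := by
  obtain ⟨h0, h2⟩ := ht
  obtain ⟨s, hs, rfl⟩ : ∃ s : ℝ, 0 < s ∧ t = s ^ 2 :=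
    ⟨√t, Real.sqrt_pos.2 h0, (Real.sq_sqrt h0.le).symm⟩
  obtain ⟨r, hr, hr2⟩ : ∃ r : ℝ, 0 < r ∧ r ^ 2 = 2 := ⟨√2, by positivity, by norm_num⟩
  have hr' : √(2 : ℝ) = r := by rw [← hr2, Real.sqrt_sq hr.le]
  have hrs : r * s ≤ 1 := by
    rw [← sq_le_one_iff₀ (by positivity), mul_pow, hr2]; linarith
  have hr1 : 1.4 < r := by nlinarith
  unfold Tfun
  rw [Real.sqrt_div (sq_nonneg s), Real.sqrt_sq hs.le, hr']
  interval_cases w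
  · have : 1 - s ^ 2 ≠ 0 := by nlinarith
    norm_num
    field_simp
    exact le_rfl
  · have hd : 0 < 2 - s ^ 2 := by nlinarith
    have e : s ^ 2 / 2 ^ (2 - 1) / (1 - s ^ 2 / 2 ^ (2 - 1)) *
        ((1 - s ^ 2) / s + (((2 : ℕ) : ℝ) - 1) / r) =
        s * (r * (1 - s ^ 2) + s) / (r * (2 - s ^ 2)) := by
      have : 1 - s ^ 2 / 2 ≠ 0 := by nlinarith
      norm_num
      field_simp
    rw [e]
    norm_num [hr']
    rw [div_le_div_iff₀ (by positivity) hr]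
    have key : r * (1 - s ^ 2) + s ≤ 2 - s ^ 2 := by
      nlinarith [mul_nonneg hr.le (sub_nonneg.2 hrs), mul_nonneg hs.le (sub_nonneg.2 hrs)]
    have := mul_le_mul_of_nonneg_left key (mul_pos hs hr).le
    nlinarith
  · have hd : 0 < 4 - s ^ 2 := by nlinarith
    have e : s ^ 2 / 2 ^ (3 - 1) / (1 - s ^ 2 / 2 ^ (3 - 1)) *
        ((1 - s ^ 2) / s + (((3 : ℕ) : ℝ) - 1) / r) =
        s * (1 - s ^ 2 + r * s) / (4 - s ^ 2) := by
      have : 1 - s ^ 2 / 4 ≠ 0 := by nlinarith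
      have h2r : 2 / r = r := by rw [← hr2]; field_simp
      norm_num [h2r]
      field_simp
    have h4 : √((2 : ℝ) ^ (3 - 1)) = 2 := by norm_num
    rw [e, h4, div_le_div_iff₀ hd two_pos]
    have key : 2 * (1 - s ^ 2 + r * s) ≤ 4 - s ^ 2 := by
      nlinarith [sq_nonneg (s - r)]
    nlinarith [mul_le_mul_of_nonneg_left key hs.le]

lemma prod_le_arith_mean_pow {d : ℕ} (hd : 0 < d) (x : Fin d → ℝ) (hx : ∀ j, 0 ≤ x j) :
    ∏ j, x j ≤ ((∑ j, x j) / d) ^ d := by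
  have h := Real.geom_mean_le_arith_mean Finset.univ (fun _ => (1 : ℝ)) x
    (fun _ _ => zero_le_one) (by simpa using hd) fun j _ => hx j
  simp only [Real.rpow_one, one_mul, Finset.sum_const, Finset.card_univ, Fintype.card_fin,
    nsmul_eq_mul, mul_one] at h
  have hp : 0 ≤ ∏ j, x j := Finset.prod_nonneg fun j _ => hx j
  calc ∏ j, x j = ((∏ j, x j) ^ (d : ℝ)⁻¹) ^ d := (Real.rpow_inv_natCast_pow hp hd.ne').symm
    _ ≤ _ := pow_le_pow_left₀ (Real.rpow_nonneg hp _) h d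

/-- With `p` the mean of the `ĥ(t_j, w_j)`, an upper bound for `κ_d` follows from an inequality
in the single variable `p`. -/
lemma kap_lt {d : ℕ} (hd : 0 < d) {w : Fin d → ℕ} (hw : ∀ j, 1 ≤ w j ∧ w j ≤ 3)
    {t : Fin d → ℝ} (ht : ∀ j, t j ∈ Set.Ioc (0 : ℝ) (1 / 2)) {B : ℝ} (hB : 0 < B)
    (h : ∀ p : ℝ, 1 / 2 ≤ p → p ≤ 1 →
      (d : ℝ) ^ 2 * (1 - p) * p ^ d < (0.981 * B) ^ 2 * (1 + p ^ d)) :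
    kap d w t < B := by
  have hd' : (0 : ℝ) < d := by exact_mod_cast hd
  set u : Fin d → ℝ := fun j => t j / 2 ^ (w j - 1)
  have hu0 : ∀ j, 0 < u j := fun j => div_pos (ht j).1 (by positivity)
  have hu2 : ∀ j, u j ≤ 1 / 2 := fun j =>
    (div_le_self (ht j).1.le (one_le_pow₀ one_le_two)).trans (ht j).2
  set P := ∏ j, (1 - u j)
  have hP0 : 0 < P := Finset.prod_pos fun j _ => by linarith [hu2 j]
  set v := (∑ j, u j) / d with hv
  have hvd : ∑ j, u j = d * v := by rw [hv]; field_simp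
  have hv0 : 0 ≤ v := div_nonneg (Finset.sum_nonneg fun j _ => (hu0 j).le) hd'.le
  have hv2 : v ≤ 1 / 2 := by
    rw [hv, div_le_iff₀ hd']
    calc ∑ j, u j ≤ ∑ _j : Fin d, (1 / 2 : ℝ) := Finset.sum_le_sum fun j _ => hu2 j
      _ = 1 / 2 * d := by simp [mul_comm]
  have hPv : P ≤ (1 - v) ^ d := by
    have := prod_le_arith_mean_pow hd (fun j => 1 - u j) fun j => by linarith [hu2 j]
    refine this.trans_eq ?_
    congr 1
    rw [Finset.sum_sub_distrib, hvd]
    simp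
    field_simp
  have hS : (∑ j, √(u j)) ^ 2 ≤ (d : ℝ) ^ 2 * v := by
    have := sq_sum_le_card_mul_sum_sq (s := Finset.univ) (f := fun j => √(u j))
    simp only [Real.sq_sqrt (hu0 _).le, hvd, Finset.card_univ, Fintype.card_fin] at this
    linarith
  have hT : ∑ a, Tfun (t a) (w a) * amort (w a) ≤ (∑ j, √(u j)) * (0.981)⁻¹ := by
    rw [Finset.sum_mul]
    refine Finset.sum_le_sum fun j _ => ?_
    rw [amort_eq_of_le_three (hw j).1 (hw j).2]
    exact mul_le_mul_of_nonneg_right (Tfun_le_sqrt (hw j).1 (hw j).2 (ht j)) (by norm_num)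
  have hg : P / (1 + P) ≤ (1 - v) ^ d / (1 + (1 - v) ^ d) := by
    rw [div_le_div_iff₀ (by linarith) (by linarith)]
    linarith
  have hpd : 0 < (1 - v) ^ d := hP0.trans_le hPv
  have hsq : (√(P / (1 + P)) * ∑ j, √(u j)) ^ 2 < (0.981 * B) ^ 2 := by
    rw [mul_pow, Real.sq_sqrt (by positivity)]
    calc P / (1 + P) * (∑ j, √(u j)) ^ 2
        ≤ (1 - v) ^ d / (1 + (1 - v) ^ d) * ((d : ℝ) ^ 2 * v) := by gcongr
      _ < (0.981 * B) ^ 2 := by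
        rw [div_mul_eq_mul_div, div_lt_iff₀ (by linarith)]
        have := h (1 - v) (by linarith) (by linarith)
        linarith
  have hlt := lt_of_pow_lt_pow_left₀ 2 (by positivity) hsq
  calc kap d w t ≤ √(P / (1 + P)) * ((∑ j, √(u j)) * (0.981)⁻¹) :=
        mul_le_mul_of_nonneg_left hT (Real.sqrt_nonneg _)
    _ < B := by
      rw [← mul_assoc, ← div_eq_mul_inv, div_lt_iff₀ (by norm_num)]
      linarith

/-- numerical bounds for small group sizes: for `1 ≤ w_j ≤ 3` and
`t ∈ (0,1/2]^d`: `κ_4 < 1`, `κ_3 < 0.85`, `κ_2 < 0.67`, `κ_1 < 0.42`. -/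
theorem stmt8 (d : ℕ) (w : Fin d → ℕ) (hw : ∀ j, 1 ≤ w j ∧ w j ≤ 3)
    (t : Fin d → ℝ) (ht : ∀ j, t j ∈ Set.Ioc (0 : ℝ) (1 / 2)) :
    (d = 4 → kap d w t < 1) ∧
    (d = 3 → kap d w t < 0.85) ∧
    (d = 2 → kap d w t < 0.67) ∧
    (d = 1 → kap d w t < 0.42) := by
  refine ⟨?_, ?_, ?_, ?_⟩ <;> rintro rfl <;>
    refine kap_lt (by norm_num) hw ht (by norm_num) fun p hp hp' => ?_ <;> norm_num
  · have h0 : 0 ≤ p := by linarith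
    nlinarith [mul_nonneg (pow_nonneg h0 3) (sq_nonneg (p - 0.752)),
      mul_nonneg (pow_nonneg h0 2) (sq_nonneg (p - 0.752)),
      mul_nonneg h0 (sq_nonneg (p - 0.752)), sq_nonneg (p - 0.752)]
  · have h0 : 0 ≤ p := by linarith
    nlinarith [mul_nonneg (pow_nonneg h0 2) (sq_nonneg (p - 0.692)),
      mul_nonneg h0 (sq_nonneg (p - 0.692)), sq_nonneg (p - 0.692)]
  · have h0 : 0 ≤ p := by linarith
    nlinarith [mul_nonneg h0 (sq_nonneg (p - 0.595)), sq_nonneg (p - 0.595)]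
  · nlinarith
end

section
/- Fix α = 0.981. For every integer w ≥ 4 and every t ∈ (0,1/2], κ_1^{(w)}(t) < 0.14; that is, g(1 − t/2^{w−1}) · T(t,w) · α^{−⌈log_4(w+1)⌉} < 0.14. -/
open Finset

/-- Incrementing `w` multiplies `amort w` by at most `1/α`. -/
lemma amort_succ_le (w : ℕ) : 0.981 * amort (w + 1) ≤ amort w := by
  have hclog : Nat.clog 4 (w + 1 + 1) ≤ Nat.clog 4 (w + 1) + 1 := by
    apply Nat.clog_le_of_le_pow
    have := Nat.le_pow_clog (b := 4) (by norm_num) (w + 1)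
    rw [pow_succ]
    omega
  calc 0.981 * amort (w + 1)
      ≤ 0.981 * (0.981 : ℝ) ^ (-(Nat.clog 4 (w + 1) : ℤ) - 1) := by
        unfold amort
        refine mul_le_mul_of_nonneg_left ?_ (by norm_num)
        exact zpow_le_zpow_right_of_le_one₀ (by norm_num) (by norm_num) (by omega)
    _ = amort w := by
        rw [amort, zpow_sub_one₀ (by norm_num)]
        field_simp

/-- For `w ≥ 4`, `w / 2^(w-1) * amort w` is at most its value at `w = 4`, which is below `0.52`. -/
lemma div_two_pow_mul_amort_le {w : ℕ} (hw : 4 ≤ w) :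
    (w : ℝ) / 2 ^ (w - 1) * amort w ≤ 0.52 := by
  induction w, hw using Nat.le_induction with
  | base =>
    have hclog : Nat.clog 4 (4 + 1) = 2 := by norm_num
    rw [amort, hclog]
    norm_num [zpow_neg]
  | succ n hn ih =>
    have hn' : (4 : ℝ) ≤ n := by exact_mod_cast hn
    have hpow : (2 : ℝ) ^ (n + 1 - 1) = 2 ^ (n - 1) * 2 := by
      rw [← pow_succ]
      congr 1
      omega
    refine le_trans ?_ ih
    calc ((n + 1 : ℕ) : ℝ) / 2 ^ (n + 1 - 1) * amort (n + 1)
        = ((n : ℝ) + 1) / 2 * amort (n + 1) / 2 ^ (n - 1) := by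
          rw [hpow]
          push_cast
          field_simp
      _ ≤ n * amort n / 2 ^ (n - 1) := by
          gcongr ?_ / _
          nlinarith [amort_succ_le n, amort_pos (n + 1)]
      _ = n / 2 ^ (n - 1) * amort n := by ring

lemma gfun_le_mul {h : ℝ} (hh : 15 / 16 ≤ h) : gfun h ≤ 0.742 * h := by
  apply Real.sqrt_le_iff.mpr
  refine ⟨by linarith, ?_⟩
  rw [div_le_iff₀ (by linarith)]
  have hone : 1 ≤ 0.742 ^ 2 * (h * (1 + h)) := by nlinarith
  nlinarith

/-- The left-hand side is maximal at `t = 1/2`, where it equals `c / (2√2)`. -/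
lemma mul_add_div_sqrt_le {t c : ℝ} (ht : t ∈ Set.Ioc (0 : ℝ) (1 / 2)) (hc : 2 ≤ c) :
    t * ((1 - t) / √t + (c - 1) / √2) ≤ 0.3536 * c := by
  obtain ⟨ht0, ht1⟩ := ht
  obtain ⟨s, hs⟩ : ∃ s, s = √t := ⟨_, rfl⟩
  obtain ⟨r, hr⟩ : ∃ r, r = 1 / √2 := ⟨_, rfl⟩
  have hs0 : 0 < s := hs ▸ Real.sqrt_pos.mpr ht0
  have hr0 : 0 < r := by rw [hr]; positivity
  have hst : t = s ^ 2 := by rw [hs, Real.sq_sqrt ht0.le]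
  have hr2 : r ^ 2 = 1 / 2 := by rw [hr, div_pow, Real.sq_sqrt (by norm_num)]; norm_num
  have hsr : s ≤ r := by
    refine (sq_le_sq₀ hs0.le hr0.le).mp ?_
    linarith
  have hr1 : r ≤ 0.7072 := by
    refine (sq_le_sq₀ hr0.le (by norm_num)).mp ?_
    rw [hr2]
    norm_num
  have hleft : t * ((1 - t) / √t + (c - 1) / √2) = s - s ^ 3 + (c - 1) * s ^ 2 * r := by
    rw [div_eq_mul_one_div (c - 1), ← hr, ← hs, hst]
    field_simp
  have hdiff : c * r / 2 - (s - s ^ 3 + (c - 1) * s ^ 2 * r)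
      = (r - s) * ((1 / 2 - s ^ 2) + (c - 2) * (r * s) + (c - 1) / 2) := by
    linear_combination (-(c - 2) * s) * hr2
  have hfactor : 0 ≤ (1 / 2 - s ^ 2) + (c - 2) * (r * s) + (c - 1) / 2 := by
    nlinarith [mul_pos hr0 hs0]
  have hprod := mul_nonneg (sub_nonneg.mpr hsr) hfactor
  rw [hleft]
  nlinarith

/-- for every integer `w ≥ 4` and every `t ∈ (0,1/2]`,
`κ_1^{(w)}(t) = g(1 − t/2^{w−1}) · T(t,w) · α^{−⌈log_4(w+1)⌉} < 0.14`. -/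
theorem stmt9 (w : ℕ) (hw : 4 ≤ w) (t : ℝ) (ht : t ∈ Set.Ioc (0 : ℝ) (1 / 2)) :
    gfun (1 - t / 2 ^ (w - 1)) * Tfun t w * amort w < 0.14 := by
  have hw' : (4 : ℝ) ≤ w := by exact_mod_cast hw
  have hpow : (8 : ℝ) ≤ 2 ^ (w - 1) := by
    calc (8 : ℝ) = 2 ^ 3 := by norm_num
      _ ≤ 2 ^ (w - 1) := pow_le_pow_right₀ (by norm_num) (by omega)
  have hx : t / 2 ^ (w - 1) ≤ 1 / 16 := by
    rw [div_le_iff₀ (by positivity)]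
    linarith [ht.2]
  have hh : 15 / 16 ≤ 1 - t / 2 ^ (w - 1) := by linarith
  have hT : 0 ≤ Tfun t w := by
    have h0 := ht.1
    have h1 : 0 ≤ 1 - t := by linarith [ht.2]
    have h2 : 0 ≤ (w : ℝ) - 1 := by linarith
    have h3 : 0 ≤ 1 - t / 2 ^ (w - 1) := by linarith
    unfold Tfun
    positivity
  have ha := amort_pos w
  calc gfun (1 - t / 2 ^ (w - 1)) * Tfun t w * amort w
      ≤ 0.742 * (1 - t / 2 ^ (w - 1)) * Tfun t w * amort w := by
        gcongr
        exact gfun_le_mul hh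
    _ = 0.742 * (t * ((1 - t) / √t + ((w : ℝ) - 1) / √2)) / 2 ^ (w - 1) * amort w := by
        have h3 : 1 - t / 2 ^ (w - 1) ≠ 0 := by linarith
        unfold Tfun
        generalize (1 - t) / √t + ((w : ℝ) - 1) / √2 = b
        rw [← mul_assoc, mul_assoc 0.742, mul_div_cancel₀ _ h3]
        ring
    _ ≤ 0.742 * (0.3536 * w) / 2 ^ (w - 1) * amort w := by
        gcongr 0.742 * ?_ / _ * _
        exact mul_add_div_sqrt_le ht (by linarith)
    _ = 0.742 * 0.3536 * (w / 2 ^ (w - 1) * amort w) := by ring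
    _ ≤ 0.742 * 0.3536 * 0.52 := by
        gcongr
        exact div_two_pow_mul_amort_le hw
    _ < 0.14 := by norm_num
end

section
/- Let C be an at-most-one CSP instance in which every constraint is a set of at most 4 distinct variables and every variable occurs in at most 3 constraints. Let x be a variable occurring in exactly the constraints c_1,…,c_d with d ≥ 1, and set w_j = |c_j| − 1. Then R(C,x) = ∏_{j=1}^{d} 1/(1 + Σ_{i=1}^{w_j} R(C_{j,i}, x_{j,i})), with the convention that R(C_{j,i}, x_{j,i}) = 0 when x_{j,i} was pinned to 1 in forming C_{j,i}, and where an empty product (d = 0) and an empty inner sum (w_j = 0) equal 1 and 0 respectively. -/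
open Finset

variable {V : Type*} [Fintype V] [DecidableEq V]

/-- An assignment `σ` satisfies an at-most-one CSP instance (a finite collection of
constraints, each a finite set of variables) if every constraint contains at most one
variable with value `false` (`false` encodes `0`). -/
def AOSat (C : List (Finset V)) (σ : V → Bool) : Prop :=
  ∀ c ∈ C, (c.filter (fun v => σ v = false)).card ≤ 1

/-- The marginal ratio `R(C,x) = P_C(x=0)/P_C(x=1)` of an at-most-one instance whose set
of variables pinned to `1` so far is `P`; by convention `R = 0` if `x` was pinned to `1`.
(Pinned variables are removed from all constraints, so they are free and do not affect
the ratio.) -/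
noncomputable def RAO (C : List (Finset V)) (P : Finset V) (x : V) : ℝ :=
  if x ∈ P then 0
  else (Nat.card {σ : V → Bool // AOSat C σ ∧ σ x = false} : ℝ) /
    (Nat.card {σ : V → Bool // AOSat C σ ∧ σ x = true} : ℝ)

/-- The set of variables pinned to `1` in forming `C_{j,i}`: all variables (other than `x`)
of the constraints `c_k` with `k > j`, together with all variables of `c_j` other than `x`
and `x_{j,i}` (here `X i`). -/
def aoPins (x : V) {d : ℕ} (c : Fin d → Finset V) {m : ℕ} (X : Fin m → V)
    (j : Fin d) (i : Fin m) : Finset V :=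
  (Finset.univ.filter (fun k => j < k)).biUnion (fun k => (c k).erase x) ∪
    ((c j).erase x).erase (X i)

/-- The constraint list of the sub-instance `C_{j,i}`: constraints of `C` not containing
`x`, plus `c_k ∖ {x}` for `k < j` (the constraints `c_j` and `c_k`, `k > j`, are deleted),
with all pinned variables removed from every constraint. -/
def aoSub (C : List (Finset V)) (x : V) {d : ℕ} (c : Fin d → Finset V) {m : ℕ}
    (X : Fin m → V) (j : Fin d) (i : Fin m) : List (Finset V) :=
  (C.filter (fun cl => decide (x ∉ cl))).map (fun cl => cl \ aoPins x c X j i) ++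
    ((List.ofFn c).take j.1).map (fun cl => (cl.erase x) \ aoPins x c X j i)

set_option linter.unusedSectionVars false

/-- A predicate that does not depend on the coordinates in `S` has `2 ^ |S|` times as many
solutions as its restriction to assignments equal to `true` on `S`. -/
lemma card_eq_two_pow_mul_card_true_on (S : Finset V) (Q : (V → Bool) → Prop)
    (hQ : ∀ σ τ : V → Bool, (∀ v, v ∉ S → σ v = τ v) → (Q σ ↔ Q τ)) :
    Nat.card {σ : V → Bool // Q σ} =
      2 ^ S.card * Nat.card {σ : V → Bool // Q σ ∧ ∀ v ∈ S, σ v = true} := by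
  have e : {σ : V → Bool // Q σ} ≃
      (S → Bool) × {σ : V → Bool // Q σ ∧ ∀ v ∈ S, σ v = true} :=
    { toFun := fun σ => (fun s => σ.1 s, ⟨fun v => if v ∈ S then true else σ.1 v,
        (hQ _ _ (fun v hv => by simp [hv])).1 σ.2, fun v hv => by simp [hv]⟩)
      invFun := fun p => ⟨fun v => if h : v ∈ S then p.1 ⟨v, h⟩ else p.2.1 v,
        (hQ _ _ (fun v hv => by simp [hv])).1 p.2.2.1⟩
      left_inv := fun σ => by
        ext v
        by_cases hv : v ∈ S <;> simp [hv]
      right_inv := fun p => by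
        refine Prod.ext ?_ (Subtype.ext ?_)
        · funext s
          simp
        · funext v
          by_cases hv : v ∈ S
          · simp [hv, p.2.2.2 v hv]
          · simp [hv] }
  rw [Nat.card_congr e, Nat.card_prod]
  simp

/-- Solutions of the instance at stage `n` of the recursion, with `x` set to `true`: the
constraints avoiding `x` and those among the `c k` with `k < n` hold, and all variables of the
remaining `c k` are `true`. -/
def AOStage (C : List (Finset V)) (x : V) {d : ℕ} (c : Fin d → Finset V) (n : ℕ)
    (σ : V → Bool) : Prop :=
  σ x = true ∧
    (∀ cl ∈ C, x ∉ cl → ∀ a ∈ cl, ∀ b ∈ cl, σ a = false → σ b = false → a = b) ∧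
    (∀ k : Fin d, k.1 < n → ∀ a ∈ c k, ∀ b ∈ c k, σ a = false → σ b = false → a = b) ∧
    ∀ k : Fin d, n ≤ k.1 → ∀ v ∈ c k, σ v = true

lemma aoSat_iff (C : List (Finset V)) (σ : V → Bool) :
    AOSat C σ ↔ ∀ cl ∈ C, ∀ a ∈ cl, ∀ b ∈ cl, σ a = false → σ b = false → a = b := by
  simp only [AOSat, Finset.card_le_one, Finset.mem_filter]
  grind

lemma mem_and_mem_iff_of_filter_eq_ofFn {C : List (Finset V)} {x : V} {d : ℕ}
    {c : Fin d → Finset V} (hc : C.filter (fun cl => decide (x ∈ cl)) = List.ofFn c)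
    (cl : Finset V) : cl ∈ C ∧ x ∈ cl ↔ ∃ k, c k = cl := by
  have h : cl ∈ C.filter (fun cl => decide (x ∈ cl)) ↔ cl ∈ List.ofFn c := by rw [hc]
  simpa [List.mem_ofFn] using h

lemma aoSat_and_true_iff_aoStage {C : List (Finset V)} {x : V} {d : ℕ}
    {c : Fin d → Finset V} (hc : C.filter (fun cl => decide (x ∈ cl)) = List.ofFn c)
    (σ : V → Bool) : AOSat C σ ∧ σ x = true ↔ AOStage C x c d σ := by
  have hm := mem_and_mem_iff_of_filter_eq_ofFn hc
  rw [aoSat_iff]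
  constructor
  · rintro ⟨h, hx⟩
    exact ⟨hx, fun cl hcl _ => h cl hcl, fun k _ => h _ ((hm _).2 ⟨k, rfl⟩).1,
      fun k hk => absurd k.2 (by omega)⟩
  · rintro ⟨hx, h, h', _⟩
    refine ⟨fun cl hcl => ?_, hx⟩
    by_cases hxc : x ∈ cl
    · obtain ⟨k, rfl⟩ := (hm cl).1 ⟨hcl, hxc⟩
      exact h' k k.2
    · exact h cl hcl hxc

lemma aoSat_and_false_iff_aoStage_update {C : List (Finset V)} {x : V} {d : ℕ}
    {c : Fin d → Finset V} (hc : C.filter (fun cl => decide (x ∈ cl)) = List.ofFn c)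
    (σ : V → Bool) (hx : σ x = false) :
    AOSat C σ ↔ AOStage C x c 0 (Function.update σ x true) := by
  have hm := mem_and_mem_iff_of_filter_eq_ofFn hc
  rw [aoSat_iff]
  constructor
  · intro h
    refine ⟨by simp, fun cl hcl hxc a ha b hb hσa hσb => ?_, fun k hk => absurd hk (by omega),
      fun k _ v hv => ?_⟩
    · have hax : a ≠ x := fun e => hxc (e ▸ ha)
      have hbx : b ≠ x := fun e => hxc (e ▸ hb)
      exact h cl hcl a ha b hb (by simpa [hax] using hσa) (by simpa [hbx] using hσb)
    · obtain ⟨hC, hxk⟩ := (hm _).2 ⟨k, rfl⟩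
      by_cases hvx : v = x
      · simp [hvx]
      · rw [Function.update_of_ne hvx]
        by_contra hσ
        exact hvx (h _ hC v hv x hxk (by simpa using hσ) hx)
  · rintro ⟨_, h, _, h'⟩ cl hcl a ha b hb hσa hσb
    by_cases hxc : x ∈ cl
    · obtain ⟨k, rfl⟩ := (hm cl).1 ⟨hcl, hxc⟩
      have key : ∀ v ∈ c k, σ v = false → v = x := fun v hv hσ => by
        by_contra hvx
        have := h' k (Nat.zero_le _) v hv
        rw [Function.update_of_ne hvx, hσ] at this
        cases this
      rw [key a ha hσa, key b hb hσb]
    · have hax : a ≠ x := fun e => hxc (e ▸ ha)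
      have hbx : b ≠ x := fun e => hxc (e ▸ hb)
      exact h cl hcl hxc a ha b hb (by simpa [hax] using hσa) (by simpa [hbx] using hσb)

lemma card_aoSat_false_eq_card_aoStage_zero {C : List (Finset V)} {x : V} {d : ℕ}
    {c : Fin d → Finset V} (hc : C.filter (fun cl => decide (x ∈ cl)) = List.ofFn c) :
    Nat.card {σ : V → Bool // AOSat C σ ∧ σ x = false} =
      Nat.card {σ : V → Bool // AOStage C x c 0 σ} := by
  refine Nat.card_congr
    { toFun := fun σ => ⟨Function.update σ.1 x true,
        (aoSat_and_false_iff_aoStage_update hc σ.1 σ.2.2).1 σ.2.1⟩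
      invFun := fun τ => ⟨Function.update τ.1 x false,
        (aoSat_and_false_iff_aoStage_update hc _ (by simp)).2 ?_, by simp⟩
      left_inv := fun σ => Subtype.ext ?_
      right_inv := fun τ => Subtype.ext ?_ }
  · rw [Function.update_idem, ← τ.2.1, Function.update_eq_self]
    exact τ.2
  · simpa only [Function.update_idem] using Function.update_eq_self_iff.2 σ.2.2.symm
  · simp only [Function.update_idem]
    rw [← τ.2.1, Function.update_eq_self]

lemma card_aoStage_pos (C : List (Finset V)) (x : V) {d : ℕ} (c : Fin d → Finset V) (n : ℕ) :
    0 < Nat.card {σ : V → Bool // AOStage C x c n σ} := by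
  have : Nonempty {σ : V → Bool // AOStage C x c n σ} :=
    ⟨⟨fun _ => true, by simp [AOStage]⟩⟩
  exact Nat.card_pos

/-- For assignments equal to `true` on the pinned variables and on `x`, the sub-instance imposes
the constraints avoiding `x` and the `c k` with `k < j`. -/
lemma aoSat_aoSub_iff (C : List (Finset V)) (x : V) {d : ℕ} (c : Fin d → Finset V) {m : ℕ}
    (X : Fin m → V) (j : Fin d) (i : Fin m) (σ : V → Bool)
    (hσ : ∀ v ∈ insert x (aoPins x c X j i), σ v = true) :
    AOSat (aoSub C x c X j i) σ ↔
      (∀ cl ∈ C, x ∉ cl → ∀ a ∈ cl, ∀ b ∈ cl, σ a = false → σ b = false → a = b) ∧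
      ∀ k : Fin d, k < j → ∀ a ∈ c k, ∀ b ∈ c k, σ a = false → σ b = false → a = b := by
  have hx : ∀ a, σ a = false → a ≠ x := fun a ha e => by
    have := hσ x (Finset.mem_insert_self _ _)
    rw [← e, ha] at this
    cases this
  have hP : ∀ a, σ a = false → a ∉ aoPins x c X j i := fun a ha hm => by
    have := hσ a (Finset.mem_insert_of_mem hm)
    rw [ha] at this
    cases this
  have htake : ∀ cl, cl ∈ (List.ofFn c).take j.1 ↔ ∃ k : Fin d, k < j ∧ c k = cl := fun cl => by
    rw [List.mem_take_iff_getElem]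
    constructor
    · rintro ⟨k, hk, rfl⟩
      simp only [List.length_ofFn, lt_min_iff] at hk
      exact ⟨⟨k, hk.2⟩, hk.1, by simp⟩
    · rintro ⟨k, hk, rfl⟩
      exact ⟨k.1, by simpa using hk, by simp⟩
  rw [aoSat_iff]
  constructor
  · intro h
    refine ⟨fun cl hcl hxc a ha b hb hσa hσb => ?_, fun k hk a ha b hb hσa hσb => ?_⟩
    · refine h (cl \ aoPins x c X j i) (List.mem_append_left _ (List.mem_map.2 ⟨cl, ?_, rfl⟩))
        a ?_ b ?_ hσa hσb
      · simp [hcl, hxc]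
      · simp [ha, hP a hσa]
      · simp [hb, hP b hσb]
    · refine h ((c k).erase x \ aoPins x c X j i)
        (List.mem_append_right _ (List.mem_map.2 ⟨c k, (htake _).2 ⟨k, hk, rfl⟩, rfl⟩))
        a ?_ b ?_ hσa hσb
      · simp [ha, hP a hσa, hx a hσa]
      · simp [hb, hP b hσb, hx b hσb]
  · rintro ⟨h, h'⟩ cl hcl a ha b hb hσa hσb
    rcases List.mem_append.1 hcl with hcl | hcl
    · obtain ⟨cl', hcl', rfl⟩ := List.mem_map.1 hcl
      simp only [List.mem_filter, decide_eq_true_eq] at hcl'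
      exact h cl' hcl'.1 hcl'.2 a (Finset.mem_sdiff.1 ha).1 b (Finset.mem_sdiff.1 hb).1 hσa hσb
    · obtain ⟨cl', hcl', rfl⟩ := List.mem_map.1 hcl
      obtain ⟨k, hk, rfl⟩ := (htake _).1 hcl'
      exact h' k hk a (Finset.mem_of_mem_erase (Finset.mem_sdiff.1 ha).1)
        b (Finset.mem_of_mem_erase (Finset.mem_sdiff.1 hb).1) hσa hσb

/-- The sub-instance constrains neither the pinned variables nor `x`. -/
lemma aoSat_aoSub_congr (C : List (Finset V)) (x : V) {d : ℕ} (c : Fin d → Finset V) {m : ℕ}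
    (X : Fin m → V) (j : Fin d) (i : Fin m) (σ τ : V → Bool)
    (h : ∀ v, v ∉ insert x (aoPins x c X j i) → σ v = τ v) :
    AOSat (aoSub C x c X j i) σ ↔ AOSat (aoSub C x c X j i) τ := by
  have key : ∀ cl ∈ aoSub C x c X j i, ∀ v ∈ cl, σ v = τ v := fun cl hcl v hv => by
    refine h v ?_
    rcases List.mem_append.1 hcl with hcl | hcl
    · obtain ⟨cl', hcl', rfl⟩ := List.mem_map.1 hcl
      simp only [List.mem_filter, decide_eq_true_eq] at hcl'
      grind
    · obtain ⟨cl', hcl', rfl⟩ := List.mem_map.1 hcl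
      grind
  simp only [AOSat]
  refine forall₂_congr fun cl hcl => ?_
  rw [Finset.filter_congr fun v hv => by rw [key cl hcl v hv]]

/-- The number of stage-`(j + 1)` solutions in which `X i` is the `false` variable of `c j`. -/
lemma card_aoStage_succ_and_false (C : List (Finset V)) (x : V) {d : ℕ} (c : Fin d → Finset V)
    {m : ℕ} (X : Fin m → V) (j : Fin d) (i : Fin m) (hXi : X i ∈ (c j).erase x) :
    (Nat.card {σ : V → Bool // AOStage C x c (j.1 + 1) σ ∧ σ (X i) = false} : ℝ) =
      Nat.card {σ : V → Bool // AOStage C x c j.1 σ} *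
        RAO (aoSub C x c X j i) (aoPins x c X j i) (X i) := by
  have hne := Finset.ne_of_mem_erase hXi
  have hXc := Finset.mem_of_mem_erase hXi
  have hmem : ∀ v, v ∈ insert x (aoPins x c X j i) ↔
      v = x ∨ (∃ k, j < k ∧ v ∈ c k) ∨ (v ≠ X i ∧ v ∈ c j) := fun v => by
    by_cases hv : v = x <;> simp [aoPins, hv]
  unfold RAO
  split_ifs with hP
  · obtain ⟨k, hk, hkX⟩ : ∃ k, j < k ∧ X i ∈ c k := by
      have := (hmem (X i)).1 (Finset.mem_insert_of_mem hP)
      simpa [hne] using this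
    have : IsEmpty {σ : V → Bool // AOStage C x c (j.1 + 1) σ ∧ σ (X i) = false} :=
      ⟨fun σ => by
        have := σ.2.1.2.2.2 k hk (X i) hkX
        rw [σ.2.2] at this
        cases this⟩
    simp
  · have hXS : X i ∉ insert x (aoPins x c X j i) := by simp [hne, hP]
    have hcount : ∀ b : Bool, Nat.card
        {σ : V → Bool // AOSat (aoSub C x c X j i) σ ∧ σ (X i) = b} =
        2 ^ (insert x (aoPins x c X j i)).card *
          Nat.card {σ : V → Bool // (AOSat (aoSub C x c X j i) σ ∧ σ (X i) = b) ∧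
            ∀ v ∈ insert x (aoPins x c X j i), σ v = true} := fun b =>
      card_eq_two_pow_mul_card_true_on _ _ fun σ τ h => by
        rw [aoSat_aoSub_congr C x c X j i σ τ h, h _ hXS]
    have hfalse : ∀ σ : V → Bool, ((AOSat (aoSub C x c X j i) σ ∧ σ (X i) = false) ∧
        ∀ v ∈ insert x (aoPins x c X j i), σ v = true) ↔
        (AOStage C x c (j.1 + 1) σ ∧ σ (X i) = false) := fun σ => by
      constructor
      · rintro ⟨⟨h, hf⟩, hS⟩
        obtain ⟨h1, h2⟩ := (aoSat_aoSub_iff C x c X j i σ hS).1 h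
        refine ⟨⟨hS x (by simp), h1, fun k hk => ?_, fun k hk v hv => ?_⟩, hf⟩
        · rcases Nat.lt_succ_iff_lt_or_eq.1 hk with hk | hk
          · exact h2 k hk
          · obtain rfl : k = j := Fin.ext hk
            have : ∀ v ∈ c k, σ v = false → v = X i := fun v hv hσ => by
              by_contra hvX
              have := hS v ((hmem v).2 (Or.inr (Or.inr ⟨hvX, hv⟩)))
              rw [hσ] at this
              cases this
            intro a ha b hb hσa hσb
            rw [this a ha hσa, this b hb hσb]
        · exact hS v ((hmem v).2 (Or.inr (Or.inl ⟨k, hk, hv⟩)))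
      · rintro ⟨⟨hx, h1, h2, h3⟩, hf⟩
        have hS : ∀ v ∈ insert x (aoPins x c X j i), σ v = true := fun v hv => by
          rcases (hmem v).1 hv with rfl | ⟨k, hk, hv⟩ | ⟨hvX, hv⟩
          · exact hx
          · exact h3 k hk v hv
          · by_contra hσ
            exact hvX (h2 j (Nat.lt_succ_self _) v hv _ hXc (by simpa using hσ) hf)
        exact ⟨⟨(aoSat_aoSub_iff C x c X j i σ hS).2
          ⟨h1, fun k hk => h2 k (Nat.lt_succ_of_lt hk)⟩, hf⟩, hS⟩
    have htrue : ∀ σ : V → Bool, ((AOSat (aoSub C x c X j i) σ ∧ σ (X i) = true) ∧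
        ∀ v ∈ insert x (aoPins x c X j i), σ v = true) ↔ AOStage C x c j.1 σ := fun σ => by
      constructor
      · rintro ⟨⟨h, ht⟩, hS⟩
        obtain ⟨h1, h2⟩ := (aoSat_aoSub_iff C x c X j i σ hS).1 h
        refine ⟨hS x (by simp), h1, h2, fun k hk v hv => ?_⟩
        rcases Nat.lt_or_eq_of_le hk with hk | hk
        · exact hS v ((hmem v).2 (Or.inr (Or.inl ⟨k, hk, hv⟩)))
        · obtain rfl : j = k := Fin.ext hk
          by_cases hvX : v = X i
          · rw [hvX, ht]
          · exact hS v ((hmem v).2 (Or.inr (Or.inr ⟨hvX, hv⟩)))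
      · rintro ⟨hx, h1, h2, h3⟩
        have hS : ∀ v ∈ insert x (aoPins x c X j i), σ v = true := fun v hv => by
          rcases (hmem v).1 hv with rfl | ⟨k, hk, hv⟩ | ⟨-, hv⟩
          · exact hx
          · exact h3 k (le_of_lt hk) v hv
          · exact h3 j le_rfl v hv
        exact ⟨⟨(aoSat_aoSub_iff C x c X j i σ hS).2 ⟨h1, h2⟩, h3 j le_rfl _ hXc⟩, hS⟩
    rw [hcount, hcount, Nat.card_congr (Equiv.subtypeEquivRight hfalse),
      Nat.card_congr (Equiv.subtypeEquivRight htrue)]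
    have hpos : (Nat.card {σ : V → Bool // AOStage C x c j.1 σ} : ℝ) ≠ 0 :=
      Nat.cast_ne_zero.2 (card_aoStage_pos C x c j.1).ne'
    push_cast
    field_simp

/-- Splitting stage-`(j + 1)` solutions by which variable of `c j`, if any, is `false`. -/
lemma card_aoStage_succ (C : List (Finset V)) (x : V) {d : ℕ} (c : Fin d → Finset V) {m : ℕ}
    (X : Fin m → V) (j : Fin d) (hXinj : Function.Injective X)
    (hXim : Finset.image X Finset.univ = (c j).erase x) :
    Nat.card {σ : V → Bool // AOStage C x c (j.1 + 1) σ} =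
      Nat.card {σ : V → Bool // AOStage C x c j.1 σ} +
        ∑ i, Nat.card {σ : V → Bool // AOStage C x c (j.1 + 1) σ ∧ σ (X i) = false} := by
  classical
  have hX : ∀ v, v ∈ c j → v ≠ x → ∃ i, X i = v := fun v hv hvx => by
    have : v ∈ Finset.image X Finset.univ := hXim ▸ Finset.mem_erase.2 ⟨hvx, hv⟩
    simpa using this
  have hXc : ∀ i, X i ∈ c j := fun i => by
    have : X i ∈ (c j).erase x := hXim ▸ Finset.mem_image_of_mem X (Finset.mem_univ i)
    exact Finset.mem_of_mem_erase this
  have hsplit : (Finset.univ.filter fun σ : V → Bool => AOStage C x c (j.1 + 1) σ) =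
      (Finset.univ.filter fun σ : V → Bool => AOStage C x c j.1 σ) ∪
        Finset.univ.biUnion fun i => Finset.univ.filter fun σ : V → Bool =>
          AOStage C x c (j.1 + 1) σ ∧ σ (X i) = false := by
    ext σ
    simp only [Finset.mem_filter, Finset.mem_univ, true_and, Finset.mem_union,
      Finset.mem_biUnion]
    constructor
    · intro h
      by_cases hf : ∃ i, σ (X i) = false
      · obtain ⟨i, hi⟩ := hf
        exact Or.inr ⟨i, h, hi⟩
      · left
        obtain ⟨hx, h1, h2, h3⟩ := h
        refine ⟨hx, h1, fun k hk => h2 k (Nat.lt_succ_of_lt hk), fun k hk v hv => ?_⟩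
        rcases Nat.lt_or_eq_of_le hk with hk | hk
        · exact h3 k hk v hv
        · obtain rfl : j = k := Fin.ext hk
          by_cases hvx : v = x
          · rw [hvx, hx]
          · obtain ⟨i, rfl⟩ := hX v hv hvx
            by_contra hσ
            exact hf ⟨i, by simpa using hσ⟩
    · rintro (⟨hx, h1, h2, h3⟩ | ⟨i, h, -⟩)
      · refine ⟨hx, h1, fun k hk => ?_, fun k hk => h3 k (by omega)⟩
        rcases Nat.lt_succ_iff_lt_or_eq.1 hk with hk | hk
        · exact h2 k hk
        · intro a ha b hb hσa
          rw [h3 k hk.ge a ha] at hσa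
          cases hσa
      · exact h
  simp only [Nat.card_eq_fintype_card, Fintype.card_subtype]
  rw [hsplit, Finset.card_union_of_disjoint, Finset.card_biUnion]
  · intro i _ i' _ hii
    refine Finset.disjoint_left.2 fun σ h h' => hii (hXinj ?_)
    simp only [Finset.mem_filter, Finset.mem_univ, true_and] at h h'
    exact h.1.2.2.1 j (Nat.lt_succ_self _) _ (hXc i) _ (hXc i') h.2 h'.2
  · refine Finset.disjoint_left.2 fun σ h h' => ?_
    simp only [Finset.mem_filter, Finset.mem_univ, true_and, Finset.mem_biUnion] at h h'
    obtain ⟨i, -, hi⟩ := h'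
    rw [h.2.2.2 j le_rfl _ (hXc i)] at hi
    cases hi

lemma prod_range_div_succ (f : ℕ → ℝ) (hf : ∀ n, f n ≠ 0) (n : ℕ) :
    ∏ i ∈ Finset.range n, f i / f (i + 1) = f 0 / f n := by
  induction n with
  | zero => simp [hf 0]
  | succ n ih =>
    rw [Finset.prod_range_succ, ih, div_mul_div_cancel₀ (hf n)]

/-- recursion for the at-most-one CSP: let `C` be an at-most-one instance
with constraints of at most `4` distinct variables and every variable in at most `3`
constraints; let `x` occur in exactly the constraints `c_1,…,c_d` (`d ≥ 1`), with
`w_j = |c_j| − 1` and `x_{j,1},…,x_{j,w_j}` enumerating the variables of `c_j` other than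
`x`.  Then `R(C,x) = ∏_j 1/(1 + Σ_i R(C_{j,i},x_{j,i}))`, where `R(C_{j,i},x_{j,i}) = 0`
when `x_{j,i}` was pinned to `1` in forming `C_{j,i}` (and an empty product or inner sum
equals `1`, resp. `0`). -/
theorem stmt11 (C : List (Finset V))
    (hcard : ∀ cl ∈ C, cl.card ≤ 4)
    (hocc : ∀ v : V, (C.filter (fun cl => decide (v ∈ cl))).length ≤ 3)
    (x : V) (d : ℕ) (hd : 1 ≤ d) (c : Fin d → Finset V)
    (hc : C.filter (fun cl => decide (x ∈ cl)) = List.ofFn c)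
    (w : Fin d → ℕ) (hw : ∀ j, w j + 1 = (c j).card)
    (X : (j : Fin d) → Fin (w j) → V) (hXinj : ∀ j, Function.Injective (X j))
    (hXim : ∀ j, Finset.image (X j) Finset.univ = (c j).erase x) :
    RAO C ∅ x = ∏ j : Fin d,
      1 / (1 + ∑ i : Fin (w j), RAO (aoSub C x c (X j) j i) (aoPins x c (X j) j i) (X j i)) := by
  have hN : ∀ n, (Nat.card {σ : V → Bool // AOStage C x c n σ} : ℝ) ≠ 0 := fun n =>
    Nat.cast_ne_zero.2 (card_aoStage_pos C x c n).ne'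
  have hfactor : ∀ j : Fin d,
      1 / (1 + ∑ i, RAO (aoSub C x c (X j) j i) (aoPins x c (X j) j i) (X j i)) =
        (Nat.card {σ : V → Bool // AOStage C x c j.1 σ} : ℝ) /
          Nat.card {σ : V → Bool // AOStage C x c (j.1 + 1) σ} := fun j => by
    have hsucc : (Nat.card {σ : V → Bool // AOStage C x c (j.1 + 1) σ} : ℝ) =
        Nat.card {σ : V → Bool // AOStage C x c j.1 σ} *
          (1 + ∑ i, RAO (aoSub C x c (X j) j i) (aoPins x c (X j) j i) (X j i)) := by
      rw [card_aoStage_succ C x c (X j) j (hXinj j) (hXim j), mul_add, mul_one, Finset.mul_sum]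
      push_cast
      congr 1
      refine Finset.sum_congr rfl fun i _ => card_aoStage_succ_and_false C x c (X j) j i ?_
      exact hXim j ▸ Finset.mem_image_of_mem (X j) (Finset.mem_univ i)
    rw [hsucc, div_mul_eq_div_div, div_self (hN _)]
  rw [Finset.prod_congr rfl fun j _ => hfactor j,
    Fin.prod_univ_eq_prod_range (fun n =>
      (Nat.card {σ : V → Bool // AOStage C x c n σ} : ℝ) /
        Nat.card {σ : V → Bool // AOStage C x c (n + 1) σ}) d,
    prod_range_div_succ (fun n => (Nat.card {σ : V → Bool // AOStage C x c n σ} : ℝ)) hN d,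
    RAO, if_neg (Finset.notMem_empty x), card_aoSat_false_eq_card_aoStage_zero hc,
    Nat.card_congr (Equiv.subtypeEquivRight (aoSat_and_true_iff_aoStage hc))]
end

section
/- Let d ∈ {1,2} and let w_1,…,w_d be integers with 1 ≤ w_j ≤ 3. For all reals r_{j,i} ∈ [0,1] (1 ≤ j ≤ d, 1 ≤ i ≤ w_j), one has (1/√(1 + ∏_{k=1}^{d}(1 + Σ_{i=1}^{w_k} r_{k,i}))) · Σ_{j=1}^{d} [Σ_{i=1}^{w_j} √(r_{j,i}(1 + r_{j,i}))] / (1 + Σ_{i=1}^{w_j} r_{j,i}) < 0.99. -/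
open Finset

/-- By Cauchy–Schwarz, `∑ √(f i (1 + f i)) ≤ √(S (S + 3))` with `S = ∑ f i`; dividing by `1 + S`
gives a bound that is quadratic in `1 / (1 + S)`. -/
lemma sq_sum_sqrt_div_le {n : ℕ} (hn : n ≤ 3) (f : Fin n → ℝ) (hf : ∀ i, 0 ≤ f i) :
    ((∑ i, Real.sqrt (f i * (1 + f i))) / (1 + ∑ i, f i)) ^ 2 ≤
      1 + (1 + ∑ i, f i)⁻¹ - 2 * ((1 + ∑ i, f i)⁻¹) ^ 2 := by
  have hS : 0 ≤ ∑ i, f i := Finset.sum_nonneg fun i _ => hf i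
  have hcs : (∑ i, Real.sqrt (f i * (1 + f i))) ^ 2 ≤ (∑ i, f i) * ∑ i, (1 + f i) :=
    Finset.sum_sq_le_sum_mul_sum_of_sq_le_mul _ (fun i _ => hf i)
      (fun i _ => by linarith [hf i])
      (fun i _ => (Real.sq_sqrt (mul_nonneg (hf i) (by linarith [hf i]))).le)
  have hsum : ∑ i, (1 + f i) = n + ∑ i, f i := by simp [Finset.sum_add_distrib]
  rw [hsum] at hcs
  generalize ∑ i, f i = S at *
  have hn' : (n : ℝ) ≤ 3 := by exact_mod_cast hn
  have hpos : 0 < 1 + S := by linarith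
  have hrhs : 1 + (1 + S)⁻¹ - 2 * ((1 + S)⁻¹) ^ 2 = S * (3 + S) / (1 + S) ^ 2 := by
    field_simp
    ring
  rw [hrhs, div_pow]
  gcongr
  exact hcs.trans (by gcongr)

lemma one_div_sqrt_mul_lt {P T c : ℝ} (hP : 0 < P) (hc : 0 ≤ c) (h : T ^ 2 < c ^ 2 * P) :
    1 / Real.sqrt P * T < c := by
  rw [one_div_mul_eq_div, div_lt_iff₀ (Real.sqrt_pos.2 hP)]
  refine lt_of_pow_lt_pow_left₀ 2 (by positivity) ?_
  rwa [mul_pow, Real.sq_sqrt hP.le]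

lemma quartic_pos (m : ℝ) : 0 < 8 * m ^ 4 - 4 * m ^ 3 - 3.0199 * m ^ 2 + 0.9801 := by
  nlinarith [sq_nonneg (m ^ 2 - m / 4 - 0.26), sq_nonneg (m - 0.65), sq_nonneg (m ^ 2 - 0.4225)]

/-- The two-factor estimate in the variables `u = 1 / a`, `v = 1 / b`; it reduces to the diagonal
`u = v`. -/
lemma two_mul_add_lt {a b : ℝ} (ha : 0 < a) (hb : 0 < b) :
    2 * ((1 + a⁻¹ - 2 * a⁻¹ ^ 2) + (1 + b⁻¹ - 2 * b⁻¹ ^ 2)) < 0.99 ^ 2 * (1 + a * b) := by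
  obtain ⟨u, hu⟩ : ∃ u, u = a⁻¹ := ⟨_, rfl⟩
  obtain ⟨v, hv⟩ : ∃ v, v = b⁻¹ := ⟨_, rfl⟩
  have hu0 : 0 < u := hu ▸ inv_pos.2 ha
  have hv0 : 0 < v := hv ▸ inv_pos.2 hb
  have hab : a * b = 1 / (u * v) := by rw [hu, hv]; field_simp
  rw [← hu, ← hv, hab]
  obtain ⟨m, hm⟩ : ∃ m, m = (u + v) / 2 := ⟨_, rfl⟩
  have hm0 : 0 < m := by rw [hm]; positivity
  have hprod : 1 / m ^ 2 ≤ 1 / (u * v) :=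
    one_div_le_one_div_of_le (mul_pos hu0 hv0) (by rw [hm]; nlinarith [sq_nonneg (u - v)])
  have hdiag : 4 * (1 + m - 2 * m ^ 2) < 0.9801 * (1 + 1 / m ^ 2) := by
    have hq : 0.9801 * (1 + 1 / m ^ 2) - 4 * (1 + m - 2 * m ^ 2) =
        (8 * m ^ 4 - 4 * m ^ 3 - 3.0199 * m ^ 2 + 0.9801) / m ^ 2 := by
      field_simp
      ring
    have := div_pos (quartic_pos m) (pow_pos hm0 2)
    linarith
  have hsq : 2 * m ^ 2 ≤ u ^ 2 + v ^ 2 := by rw [hm]; nlinarith [sq_nonneg (u - v)]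
  norm_num at hprod hdiag ⊢
  linarith

/-- amortized decay condition for the at-most-one recursion: for `d ∈ {1,2}`,
`1 ≤ w_j ≤ 3` and `r_{j,i} ∈ [0,1]`,
`(1/√(1 + ∏_k (1 + Σ_i r_{k,i}))) · Σ_j (Σ_i √(r_{j,i}(1+r_{j,i})))/(1 + Σ_i r_{j,i}) < 0.99`. -/
theorem stmt13 (d : ℕ) (hd : d = 1 ∨ d = 2) (w : Fin d → ℕ) (hw : ∀ j, 1 ≤ w j ∧ w j ≤ 3)
    (r : (j : Fin d) → Fin (w j) → ℝ) (hr : ∀ j i, r j i ∈ Set.Icc (0 : ℝ) 1) :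
    (1 / Real.sqrt (1 + ∏ k, (1 + ∑ i, r k i))) *
      ∑ j, (∑ i, Real.sqrt (r j i * (1 + r j i))) / (1 + ∑ i, r j i) < 0.99 := by
  have hS : ∀ j, 0 ≤ ∑ i, r j i := fun j => Finset.sum_nonneg fun i _ => (hr j i).1
  have hbound := fun j => sq_sum_sqrt_div_le (hw j).2 (r j) fun i => (hr j i).1
  have hP : 0 < 1 + ∏ k, (1 + ∑ i, r k i) := by
    have : 0 ≤ ∏ k, (1 + ∑ i, r k i) := Finset.prod_nonneg fun k _ => by linarith [hS k]
    linarith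
  refine one_div_sqrt_mul_lt hP (by norm_num) ?_
  rcases hd with rfl | rfl
  · have hS0 := hS 0
    have hb := hbound 0
    simp only [Fin.sum_univ_one, Fin.prod_univ_one, Fin.isValue] at hb ⊢
    refine hb.trans_lt ?_
    nlinarith [sq_nonneg ((1 + ∑ i, r 0 i)⁻¹ - 1 / 4)]
  · have h0 := hbound 0
    have h1 := hbound 1
    have hlt := two_mul_add_lt (a := 1 + ∑ i, r 0 i) (b := 1 + ∑ i, r 1 i)
      (by linarith [hS 0]) (by linarith [hS 1])
    rw [Fin.sum_univ_two, Fin.prod_univ_two]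
    refine add_sq_le.trans_lt (lt_of_le_of_lt ?_ hlt)
    gcongr
end

section
/- Let d ≥ 1 and let w_1,…,w_d ≥ 1 be integers. For all reals r'_{j,i} ∈ [0,1] (1 ≤ j ≤ d, 1 ≤ i ≤ w_j), setting r_j = (1/w_j)·Σ_{i=1}^{w_j} r'_{j,i}, one has (1/√(1 + ∏_{k=1}^{d}(1 + Σ_{i=1}^{w_k} r'_{k,i}))) · Σ_{j=1}^{d} [Σ_{i=1}^{w_j} √(r'_{j,i}(1 + r'_{j,i}))] / (1 + Σ_{i=1}^{w_j} r'_{j,i}) ≤ κ_d^{(w_1,…,w_d)}(r). -/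
open Finset

/-- The single-layer decay rate for the at-most-one recursion:
`κ_d^{(w_1,…,w_d)}(r) = (1/√(1 + ∏_k (1 + w_k r_k))) · Σ_j w_j √(r_j(1+r_j))/(1 + w_j r_j)`. -/
noncomputable def kapAO (d : ℕ) (w : Fin d → ℕ) (r : Fin d → ℝ) : ℝ :=
  (1 / Real.sqrt (1 + ∏ k, (1 + (w k : ℝ) * r k))) *
    ∑ j, (w j : ℝ) * Real.sqrt (r j * (1 + r j)) / (1 + (w j : ℝ) * r j)

/-- Cauchy–Schwarz for `√(x(1+x))`: the sum is at most `n` times the value at the average. -/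
theorem sum_sqrt_mul_one_add_le {n : ℕ} (hn : 1 ≤ n) (x : Fin n → ℝ) (hx : ∀ i, 0 ≤ x i) :
    ∑ i, Real.sqrt (x i * (1 + x i)) ≤
      n * Real.sqrt ((1 / (n : ℝ) * ∑ i, x i) * (1 + 1 / (n : ℝ) * ∑ i, x i)) := by
  have hn0 : (0 : ℝ) < n := by exact_mod_cast hn
  have hS : 0 ≤ ∑ i, x i := Finset.sum_nonneg fun i _ => hx i
  calc ∑ i, Real.sqrt (x i * (1 + x i))
      = ∑ i, Real.sqrt (x i) * Real.sqrt (1 + x i) :=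
        Finset.sum_congr rfl fun i _ => Real.sqrt_mul (hx i) _
    _ ≤ Real.sqrt (∑ i, x i) * Real.sqrt (∑ i, (1 + x i)) :=
        Real.sum_sqrt_mul_sqrt_le _ hx fun i => by linarith [hx i]
    _ = Real.sqrt ((n : ℝ) ^ 2 *
          ((1 / (n : ℝ) * ∑ i, x i) * (1 + 1 / (n : ℝ) * ∑ i, x i))) := by
        rw [← Real.sqrt_mul hS, Finset.sum_add_distrib]
        congr 1
        simp only [Finset.sum_const, Finset.card_univ, Fintype.card_fin, nsmul_eq_mul, mul_one]
        field_simp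
    _ = n * Real.sqrt ((1 / (n : ℝ) * ∑ i, x i) * (1 + 1 / (n : ℝ) * ∑ i, x i)) := by
        rw [Real.sqrt_mul (sq_nonneg _), Real.sqrt_sq hn0.le]

/-- replacing each group by its average only increases the two-layer rate:
with `r_j = (1/w_j)·Σ_i r'_{j,i}`, the two-layer expression is at most `κ_d^{(w)}(r)`. -/
theorem stmt14 (d : ℕ) (hd : 1 ≤ d) (w : Fin d → ℕ) (hw : ∀ j, 1 ≤ w j)
    (r' : (j : Fin d) → Fin (w j) → ℝ) (hr' : ∀ j i, r' j i ∈ Set.Icc (0 : ℝ) 1) :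
    (1 / Real.sqrt (1 + ∏ k, (1 + ∑ i, r' k i))) *
      ∑ j, (∑ i, Real.sqrt (r' j i * (1 + r' j i))) / (1 + ∑ i, r' j i) ≤
    kapAO d w (fun j => (1 / (w j : ℝ)) * ∑ i, r' j i) := by
  have hsum : ∀ j, (w j : ℝ) * (1 / (w j : ℝ) * ∑ i, r' j i) = ∑ i, r' j i := fun j => by
    have : (w j : ℝ) ≠ 0 := by exact_mod_cast (Nat.one_le_iff_ne_zero.mp (hw j))
    field_simp
  simp only [kapAO, hsum]
  refine mul_le_mul_of_nonneg_left (Finset.sum_le_sum fun j _ => ?_) (by positivity)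
  have hS : 0 ≤ ∑ i, r' j i := Finset.sum_nonneg fun i _ => (hr' j i).1
  exact div_le_div_of_nonneg_right
    (sum_sqrt_mul_one_add_le (hw j) (r' j) fun i => (hr' j i).1) (by linarith)
end

section
/- For every r ∈ [0,1]: κ_1^{(1)}(r) < 0.41, κ_1^{(2)}(r) ≤ 0.5, and κ_1^{(3)}(r) < 0.58, where κ_1^{(w)}(r) = w√(r(1+r)) / ((1 + w r)·√(2 + w r)). -/
/-- `κ_1^{(w)}(r) = w√(r(1+r)) / ((1 + w r)·√(2 + w r))`. -/
noncomputable def kapAO1 (w : ℕ) (r : ℝ) : ℝ :=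
  (w : ℝ) * Real.sqrt (r * (1 + r)) / ((1 + (w : ℝ) * r) * Real.sqrt (2 + (w : ℝ) * r))

/-- The square of `kapAO1 w r` is a rational function of `r`. -/
lemma kapAO1_sq (w : ℕ) {r : ℝ} (hr : 0 ≤ r) :
    kapAO1 w r ^ 2 = w ^ 2 * (r * (1 + r)) / ((1 + w * r) ^ 2 * (2 + w * r)) := by
  rw [kapAO1, div_pow, mul_pow, mul_pow, Real.sq_sqrt (by positivity),
    Real.sq_sqrt (by positivity)]

/-- for `r ∈ [0,1]`, `κ_1^{(1)}(r) < 0.41`, `κ_1^{(2)}(r) ≤ 0.5`,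
and `κ_1^{(3)}(r) < 0.58`. -/
theorem stmt17 (r : ℝ) (hr : r ∈ Set.Icc (0 : ℝ) 1) :
    kapAO1 1 r < 0.41 ∧ kapAO1 2 r ≤ 0.5 ∧ kapAO1 3 r < 0.58 := by
  obtain ⟨h0, h1⟩ := hr
  refine ⟨lt_of_pow_lt_pow_left₀ 2 (by norm_num) ?_,
    le_of_abs_le (abs_le_of_sq_le_sq ?_ (by norm_num)),
    lt_of_pow_lt_pow_left₀ 2 (by norm_num) ?_⟩
  · rw [kapAO1_sq 1 h0, div_lt_iff₀ (by positivity)]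
    push_cast
    nlinarith [mul_nonneg h0 (sub_nonneg.2 h1), mul_nonneg h0 (sq_nonneg (r - 1)),
      sq_nonneg (r - 1)]
  · rw [kapAO1_sq 2 h0, div_le_iff₀ (by positivity)]
    push_cast
    nlinarith [mul_nonneg h0 (sq_nonneg (1 - 2 * r)), sq_nonneg (1 - 2 * r)]
  · rw [kapAO1_sq 3 h0, div_lt_iff₀ (by positivity)]
    push_cast
    nlinarith [mul_nonneg h0 (sq_nonneg (r - 0.285)), sq_nonneg (r - 0.285)]
end
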